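/- Finite-horizon approximation: define w(T, x) = inf_{φ ∈ D_0^{1,2}(1,T)} A_{x,[1,T]}(φ) for T ∈ (1, ∞) and w_∞(x) = inf_{φ ∈ D_0^{1,2}(1,+∞)} A_x(φ). Then for every sequence (T_n) ⊂ (1, ∞) with T_n → +∞, the functions w(T_n, ·) converge to w_∞ uniformly on every compact subset of Ω. -/

import Mathlib

open MeasureTheory Real Set Filter Topology
open scoped RealInnerProductSpace ENNReal

noncomputable section
namespace NBodyHJ

attribute [local instance] Classical.propDecidable

abbrev Conf (d N : ℕ) := Fin N → EuclideanSpace ℝ (Fin d)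

variable {d N : ℕ}

/-- The mass inner product on the configuration space. -/
def minner (m : Fin N → ℝ) (x y : Conf d N) : ℝ := ∑ i, m i * ⟪x i, y i⟫

/-- The mass norm on the configuration space. -/
def mnorm (m : Fin N → ℝ) (x : Conf d N) : ℝ := Real.sqrt (minner m x x)

/-- Membership in the zero-barycenter configuration space `X`. -/
def inX (m : Fin N → ℝ) (x : Conf d N) : Prop := ∑ i, m i • x i = 0

/-- Collision configurations. -/
def collision (x : Conf d N) : Prop := ∃ i j, i ≠ j ∧ x i = x j

/-- Membership in the collision-free zero-barycenter space `Ω`. -/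
def inOmega (m : Fin N → ℝ) (x : Conf d N) : Prop := inX m x ∧ ¬ collision x

/-- The Newtonian potential (with junk value `0` for a colliding pair). -/
def U (m : Fin N → ℝ) (x : Conf d N) : ℝ :=
  ∑ i : Fin N, ∑ j : Fin N, if i < j then m i * m j / ‖x i - x j‖ else 0

/-- The time interval `(t₀, T)`, where `T ∈ (t₀, +∞]` is extended-real. -/
def timeSet (t0 : ℝ) (T : EReal) : Set ℝ := {t : ℝ | t0 < t ∧ (t : EReal) < T}

/-- Membership of the pair (curve, derivative) `(φ, φ')` in `D₀^{1,2}(t₀, T)`: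
`φ` starts at `0`, takes values in `X`, is the integral of `φ'` (hence locally
absolutely continuous), and `φ'` has finite `L²` mass norm on `(t₀, T)`. -/
def InD (m : Fin N → ℝ) (t0 : ℝ) (T : EReal) (φ φ' : ℝ → Conf d N) : Prop :=
  φ t0 = 0 ∧
  (∀ t : ℝ, t0 ≤ t → (t : EReal) < T → inX m (φ t)) ∧
  (∀ t : ℝ, t0 ≤ t → (t : EReal) < T → φ t = ∫ s in Set.Ioc t0 t, φ' s) ∧
  (∀ t : ℝ, t0 ≤ t → (t : EReal) < T → IntegrableOn φ' (Set.Ioc t0 t)) ∧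
  IntegrableOn (fun t => (mnorm m (φ' t)) ^ 2) (timeSet t0 T)

/-- The norm `‖φ‖_{D_T}`. -/
def Dnorm (m : Fin N → ℝ) (t0 : ℝ) (T : EReal) (φ' : ℝ → Conf d N) : ℝ :=
  Real.sqrt (∫ t in timeSet t0 T, (mnorm m (φ' t)) ^ 2)

/-- The motion `γ(t) = φ(t) + t a + x - a` associated with `φ` in the hyperbolic case. -/
def hypCurve (a x : Conf d N) (φ : ℝ → Conf d N) (t : ℝ) : Conf d N :=
  φ t + t • a + x - a

/-- The integrand of the hyperbolic renormalized Lagrangian action. -/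
def hypIntegrand (m : Fin N → ℝ) (a x : Conf d N) (φ φ' : ℝ → Conf d N) (t : ℝ) : ℝ :=
  (mnorm m (φ' t)) ^ 2 / 2 + U m (hypCurve a x φ t) - U m (t • a)

/-- The hyperbolic renormalized Lagrangian action `A_{x,[1,T]}(φ)`, with values in
`ℝ ∪ {+∞}` : it equals the integral of the renormalized Lagrangian if this integrand is
integrable and the motion is a.e. collision-free, and `+∞` otherwise. -/
def hypAction (m : Fin N → ℝ) (a x : Conf d N) (T : EReal) (φ φ' : ℝ → Conf d N) : EReal :=
  if IntegrableOn (hypIntegrand m a x φ φ') (timeSet 1 T) ∧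
      (∀ᵐ t ∂volume.restrict (timeSet 1 T), ¬ collision (hypCurve a x φ t))
  then ((∫ t in timeSet 1 T, hypIntegrand m a x φ φ' t : ℝ) : EReal)
  else (⊤ : EReal)

/-- The infimum of the hyperbolic renormalized action over `D₀^{1,2}(1,T)`. -/
def hypInf (m : Fin N → ℝ) (a x : Conf d N) (T : EReal) : EReal :=
  ⨅ (φ : ℝ → Conf d N) (φ' : ℝ → Conf d N) (_ : InD m 1 T φ φ'), hypAction m a x T φ φ'

/-- The renormalized value function `v(x)` in the hyperbolic case. -/
def hypValue (m : Fin N → ℝ) (a x : Conf d N) : ℝ :=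
  (hypInf m a x ⊤).toReal - minner m a x

/-!
The kinetic energy of a curve of velocity `φ'` forces its growth to be `O(√t)`, and this makes the
renormalized action coercive. Hence along a curve `γ` of bounded action `γ t - t a = O(√t)` and
`U (γ t) - U (t a) = O(t ^ (-3/2))`, with constants uniform over bounded sets of `x`. Restricting to
`[1, T]` a near-minimizer on `[1, ∞)`, or prolonging one on `[1, T]` by uniform motion of velocity
`a`, therefore costs at most `O(1 / √T)`.

Uniformity on a compact subset of `Ω` requires `w_∞` to be bounded above there. Near a point `x₀`, a
competitor departs from the motion `t ↦ x₀ - a + t a` by a fixed displacement `q` during the time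
interval `[1, 2]`. For a suitable `q` it has no collision: each pair has to avoid two lines, which
is possible because lines do not cover `ℝ ^ d` when `d ≥ 2`.
-/

section MassNorm

variable {m : Fin N → ℝ}

lemma minner_self_nonneg (hm : ∀ i, 0 ≤ m i) (v : Conf d N) : 0 ≤ minner m v v :=
  Finset.sum_nonneg fun i _ => mul_nonneg (hm i) real_inner_self_nonneg

lemma mnorm_nonneg (m : Fin N → ℝ) (v : Conf d N) : 0 ≤ mnorm m v := Real.sqrt_nonneg _

lemma mnorm_sq (hm : ∀ i, 0 ≤ m i) (v : Conf d N) : mnorm m v ^ 2 = minner m v v :=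
  Real.sq_sqrt (minner_self_nonneg hm v)

@[simp]
lemma mnorm_zero (m : Fin N → ℝ) : mnorm m (0 : Conf d N) = 0 := by
  simp [mnorm, minner]

lemma mul_norm_sq_apply_le_mnorm_sq (hm : ∀ i, 0 ≤ m i) (v : Conf d N) (i : Fin N) :
    m i * ‖v i‖ ^ 2 ≤ mnorm m v ^ 2 := by
  rw [mnorm_sq hm, minner, ← real_inner_self_eq_norm_sq]
  exact Finset.single_le_sum (f := fun i => m i * ⟪v i, v i⟫)
    (fun i _ => mul_nonneg (hm i) real_inner_self_nonneg) (Finset.mem_univ i)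

lemma norm_le_mul_mnorm (hm : ∀ i, 0 < m i) (v : Conf d N) :
    ‖v‖ ≤ √(∑ i, (m i)⁻¹) * mnorm m v := by
  have hinv : ∀ i, 0 ≤ (m i)⁻¹ := fun i => (inv_pos.2 (hm i)).le
  refine (pi_norm_le_iff_of_nonneg (by positivity [mnorm_nonneg m v])).2 fun i => ?_
  refine le_of_sq_le_sq ?_ (by positivity [mnorm_nonneg m v])
  calc ‖v i‖ ^ 2 = (m i)⁻¹ * (m i * ‖v i‖ ^ 2) := (inv_mul_cancel_left₀ (hm i).ne' _).symm
    _ ≤ (∑ i, (m i)⁻¹) * mnorm m v ^ 2 :=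
      mul_le_mul (Finset.single_le_sum (fun i _ => hinv i) (Finset.mem_univ i))
        (mul_norm_sq_apply_le_mnorm_sq (fun i => (hm i).le) v i)
        (mul_nonneg (hm i).le (sq_nonneg _)) (Finset.sum_nonneg fun i _ => hinv i)
    _ = (√(∑ i, (m i)⁻¹) * mnorm m v) ^ 2 := by
      rw [mul_pow, Real.sq_sqrt (Finset.sum_nonneg fun i _ => hinv i)]

lemma norm_sq_le_mul_mnorm_sq (hm : ∀ i, 0 < m i) (v : Conf d N) :
    ‖v‖ ^ 2 ≤ (∑ i, (m i)⁻¹) * mnorm m v ^ 2 := by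
  have hsum : 0 ≤ ∑ i, (m i)⁻¹ := Finset.sum_nonneg fun i _ => (inv_pos.2 (hm i)).le
  rw [← Real.sq_sqrt hsum, ← mul_pow]
  exact pow_le_pow_left₀ (norm_nonneg v) (norm_le_mul_mnorm hm v) 2

lemma isClosed_setOf_inX (m : Fin N → ℝ) : IsClosed {x : Conf d N | inX m x} :=
  isClosed_eq (by fun_prop) continuous_const

lemma inX.smul {x : Conf d N} (hx : inX m x) (r : ℝ) : inX m (r • x) := by
  have : ∑ i, m i • (r • x) i = r • ∑ i, m i • x i := by
    simp only [Pi.smul_apply, smul_comm (m _) r, Finset.smul_sum]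
  rw [inX, this, hx, smul_zero]

lemma inX.sub {x y : Conf d N} (hx : inX m x) (hy : inX m y) : inX m (x - y) := by
  unfold inX at *
  simp only [Pi.sub_apply, smul_sub, Finset.sum_sub_distrib, hx, hy, sub_zero]

lemma exists_inX_forall_sub_eq (hm : ∀ i, 0 < m i) (y : Conf d N) :
    ∃ c : Conf d N, inX m c ∧ ∀ i j, c i - c j = y i - y j := by
  refine ⟨fun i => y i - (∑ j, m j)⁻¹ • ∑ j, m j • y j, ?_,
    fun i j => sub_sub_sub_cancel_right _ _ _⟩
  rcases isEmpty_or_nonempty (Fin N) with h | h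
  · simp [inX]
  · have hsum : 0 < ∑ i, m i := Finset.sum_pos (fun i _ => hm i) Finset.univ_nonempty
    simp only [inX, smul_sub, Finset.sum_sub_distrib, ← Finset.sum_smul]
    rw [smul_inv_smul₀ hsum.ne', sub_self]

end MassNorm

section Separation

/-- The mutual distances in the configuration `y` are at least `r`: a quantitative form of being
collision-free. -/
def Separated (r : ℝ) (y : Conf d N) : Prop := ∀ i j, i ≠ j → r ≤ ‖y i - y j‖

variable {r s : ℝ} {x y : Conf d N}

lemma abs_norm_sub_sub_norm_sub_le (x y : Conf d N) (i j : Fin N) :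
    |‖x i - x j‖ - ‖y i - y j‖| ≤ 2 * ‖x - y‖ :=
  calc |‖x i - x j‖ - ‖y i - y j‖| ≤ ‖(x i - x j) - (y i - y j)‖ := abs_norm_sub_norm_le _ _
    _ = ‖(x - y) i - (x - y) j‖ := by rw [Pi.sub_apply, Pi.sub_apply, sub_sub_sub_comm]
    _ ≤ ‖(x - y) i‖ + ‖(x - y) j‖ := norm_sub_le _ _
    _ ≤ 2 * ‖x - y‖ := by linarith [norm_le_pi_norm (x - y) i, norm_le_pi_norm (x - y) j]

lemma Separated.not_collision (hr : 0 < r) (hy : Separated r y) : ¬ collision y := by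
  rintro ⟨i, j, hij, h⟩
  have := hy i j hij
  rw [h, sub_self, norm_zero] at this
  exact hr.not_ge this

lemma Separated.smul (hy : Separated r y) {t : ℝ} (ht : 0 ≤ t) : Separated (t * r) (t • y) :=
  fun i j hij => by
    rw [Pi.smul_apply, Pi.smul_apply, ← smul_sub, norm_smul, Real.norm_of_nonneg ht]
    exact mul_le_mul_of_nonneg_left (hy i j hij) ht

lemma Separated.perturb (hy : Separated r y) (h : s + 2 * ‖x - y‖ ≤ r) : Separated s x :=
  fun i j hij => by
    linarith [hy i j hij, (abs_le.1 (abs_norm_sub_sub_norm_sub_le x y i j)).1]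

lemma norm_sub_pos_of_not_collision (hx : ¬ collision x) {i j : Fin N} (hij : i ≠ j) :
    0 < ‖x i - x j‖ :=
  norm_pos_iff.2 (sub_ne_zero.2 fun h => hx ⟨i, j, hij, h⟩)

lemma exists_separated_of_isCompact {Y : Type*} [TopologicalSpace Y] {s : Set Y}
    (hs : IsCompact s) {γ : Y → Conf d N} (hγ : ContinuousOn γ s)
    (hcol : ∀ t ∈ s, ¬ collision (γ t)) : ∃ δ : ℝ, 0 < δ ∧ ∀ t ∈ s, Separated δ (γ t) := by
  have hev : ∀ᶠ δ in 𝓝[>] (0 : ℝ), ∀ i j, i ≠ j → ∀ t ∈ s, δ ≤ ‖γ t i - γ t j‖ := by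
    simp only [eventually_all]
    intro i j hij
    obtain ⟨c, hc, hle⟩ := hs.exists_forall_le' (f := fun t => ‖γ t i - γ t j‖) (by fun_prop)
      fun t ht => norm_sub_pos_of_not_collision (hcol t ht) hij
    filter_upwards [Ioc_mem_nhdsGT hc] with δ hδ t ht using hδ.2.trans (hle t ht)
  obtain ⟨δ, h, hδ⟩ := (hev.and self_mem_nhdsWithin).exists
  exact ⟨δ, hδ, fun t ht i j hij => h i j hij t ht⟩

lemma exists_separated (hx : ¬ collision x) : ∃ α : ℝ, 0 < α ∧ Separated α x := by
  obtain ⟨α, hα, h⟩ := exists_separated_of_isCompact (isCompact_singleton (x := x))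
    continuousOn_id (by simpa using hx)
  exact ⟨α, hα, h x rfl⟩

end Separation

section Potential

/-- The total weight of the pairs in the Newtonian potential. -/
def pairMass (m : Fin N → ℝ) : ℝ := ∑ i : Fin N, ∑ j : Fin N, if i < j then m i * m j else 0

variable {m : Fin N → ℝ} {x y : Conf d N}

lemma pairMass_nonneg (hm : ∀ i, 0 ≤ m i) : 0 ≤ pairMass m :=
  Finset.sum_nonneg fun i _ => Finset.sum_nonneg fun j _ => by
    split_ifs
    exacts [mul_nonneg (hm i) (hm j), le_rfl]

@[fun_prop]
lemma measurable_U (m : Fin N → ℝ) : Measurable (U m : Conf d N → ℝ) := by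
  refine Finset.measurable_fun_sum _ fun i _ => Finset.measurable_fun_sum _ fun j _ => ?_
  split_ifs <;> fun_prop

lemma U_sub_U_le_of_forall_pair (hm : ∀ i, 0 ≤ m i) {c : ℝ}
    (h : ∀ i j, i ≠ j → 1 / ‖x i - x j‖ - 1 / ‖y i - y j‖ ≤ c) :
    U m x - U m y ≤ pairMass m * c := by
  simp only [U, pairMass, ← Finset.sum_sub_distrib, Finset.sum_mul]
  refine Finset.sum_le_sum fun i _ => Finset.sum_le_sum fun j _ => ?_
  split_ifs with hij
  · calc m i * m j / ‖x i - x j‖ - m i * m j / ‖y i - y j‖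
        = m i * m j * (1 / ‖x i - x j‖ - 1 / ‖y i - y j‖) := by ring
      _ ≤ m i * m j * c :=
        mul_le_mul_of_nonneg_left (h i j hij.ne) (mul_nonneg (hm i) (hm j))
  · simp

lemma one_div_sub_one_div_le {u v r s e : ℝ} (hr : 0 < r) (hs : 0 < s) (hru : r ≤ u)
    (hsv : s ≤ v) (he : |u - v| ≤ e) : 1 / u - 1 / v ≤ e / (r * s) := by
  have hu : 0 < u := hr.trans_le hru
  have hv : 0 < v := hs.trans_le hsv
  calc 1 / u - 1 / v = (v - u) / (u * v) := by field_simp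
    _ ≤ e / (u * v) := by gcongr; linarith [neg_abs_le (u - v)]
    _ ≤ e / (r * s) := by gcongr; exact (abs_nonneg _).trans he

lemma U_sub_U_le_of_separated (hm : ∀ i, 0 ≤ m i) {r s : ℝ} (hr : 0 < r) (hs : 0 < s)
    (hx : Separated r x) (hy : Separated s y) :
    U m x - U m y ≤ pairMass m * (2 * ‖x - y‖ / (r * s)) :=
  U_sub_U_le_of_forall_pair hm fun i j hij =>
    one_div_sub_one_div_le hr hs (hx i j hij) (hy i j hij) (abs_norm_sub_sub_norm_sub_le x y i j)

lemma abs_U_sub_U_le_of_separated (hm : ∀ i, 0 ≤ m i) {r s : ℝ} (hr : 0 < r) (hs : 0 < s)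
    (hx : Separated r x) (hy : Separated s y) :
    |U m x - U m y| ≤ pairMass m * (2 * ‖x - y‖ / (r * s)) := by
  refine abs_sub_le_iff.2 ⟨U_sub_U_le_of_separated hm hr hs hx hy, ?_⟩
  rw [norm_sub_rev, mul_comm r]
  exact U_sub_U_le_of_separated hm hs hr hy hx

-- Distances of `y` below those of `x` only increase `U m y`, so no separation of `y` is needed.
lemma U_sub_U_le_of_not_collision (hm : ∀ i, 0 ≤ m i) {r : ℝ} (hr : 0 < r)
    (hx : Separated r x) (hy : ¬ collision y) :
    U m x - U m y ≤ pairMass m * (2 * ‖x - y‖ / (r * r)) := by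
  refine U_sub_U_le_of_forall_pair hm fun i j hij => ?_
  have hypos := norm_sub_pos_of_not_collision hy hij
  rcases le_total ‖y i - y j‖ ‖x i - x j‖ with h | h
  · have : 1 / ‖x i - x j‖ ≤ 1 / ‖y i - y j‖ := one_div_le_one_div_of_le hypos h
    have : 0 ≤ 2 * ‖x - y‖ / (r * r) := by positivity
    linarith
  · exact one_div_sub_one_div_le hr hr (hx i j hij) ((hx i j hij).trans h)
      (abs_norm_sub_sub_norm_sub_le x y i j)

end Potential

section TimeIntervals

variable {t₀ S : ℝ}

lemma timeSet_top (t₀ : ℝ) : timeSet t₀ ⊤ = Ioi t₀ := by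
  ext t; simp [timeSet]

lemma timeSet_coe (t₀ S : ℝ) : timeSet t₀ (S : EReal) = Ioo t₀ S := by
  ext t; simp [timeSet]

lemma measurableSet_timeSet (t₀ : ℝ) (T : EReal) : MeasurableSet (timeSet t₀ T) :=
  (measurableSet_Ioi (a := t₀)).inter (measurable_coe_real_ereal measurableSet_Iio)

lemma timeSet_subset_Ioi (t₀ : ℝ) (T : EReal) : timeSet t₀ T ⊆ Ioi t₀ := fun _ ht => ht.1

lemma timeSet_mono (t₀ : ℝ) {S T : EReal} (h : S ≤ T) : timeSet t₀ S ⊆ timeSet t₀ T :=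
  fun _ ht => ⟨ht.1, ht.2.trans_le h⟩

lemma Ioc_subset_timeSet {T : EReal} (hS : (S : EReal) < T) : Ioc t₀ S ⊆ timeSet t₀ T :=
  fun _ ht => ⟨ht.1, (EReal.coe_le_coe_iff.2 ht.2).trans_lt hS⟩

lemma restrict_timeSet_top_eq_add (h : t₀ ≤ S) :
    volume.restrict (timeSet t₀ ⊤) =
      volume.restrict (timeSet t₀ (S : EReal)) + volume.restrict (Ioi S) := by
  rw [timeSet_top, timeSet_coe, Measure.restrict_congr_set Ioo_ae_eq_Ioc,
    ← Measure.restrict_union (Ioc_disjoint_Ioi le_rfl) measurableSet_Ioi, Ioc_union_Ioi_eq_Ioi h]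

lemma integrableOn_timeSet_top_iff {E : Type*} [NormedAddCommGroup E] (h : t₀ ≤ S) {f : ℝ → E} :
    IntegrableOn f (timeSet t₀ ⊤) ↔
      IntegrableOn f (timeSet t₀ (S : EReal)) ∧ IntegrableOn f (Ioi S) := by
  rw [IntegrableOn, restrict_timeSet_top_eq_add h, integrable_add_measure, IntegrableOn,
    IntegrableOn]

lemma setIntegral_timeSet_top_eq_add {E : Type*} [NormedAddCommGroup E] [NormedSpace ℝ E]
    (h : t₀ ≤ S) {f : ℝ → E} (hf : IntegrableOn f (timeSet t₀ ⊤)) :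
    ∫ t in timeSet t₀ ⊤, f t = (∫ t in timeSet t₀ (S : EReal), f t) + ∫ t in Ioi S, f t := by
  obtain ⟨h₁, h₂⟩ := (integrableOn_timeSet_top_iff h).1 hf
  rw [restrict_timeSet_top_eq_add h, integral_add_measure h₁ h₂]

lemma integrableOn_rpow_neg_three_halves (hS : 0 < S) :
    IntegrableOn (fun t : ℝ => t ^ (-(3 / 2) : ℝ)) (Ioi S) :=
  integrableOn_Ioi_rpow_of_lt (by norm_num) hS

lemma integral_rpow_neg_three_halves (hS : 0 < S) :
    ∫ t in Ioi S, t ^ (-(3 / 2) : ℝ) = 2 / √S := by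
  rw [integral_Ioi_rpow_of_lt (by norm_num) hS, Real.sqrt_eq_rpow,
    show (-(3 / 2) : ℝ) + 1 = -(1 / 2) by norm_num, Real.rpow_neg hS.le]
  field_simp

lemma setIntegral_rpow_neg_three_halves_le (hS : 0 < S) {s : Set ℝ} (hs : s ⊆ Ioi S) :
    ∫ t in s, t ^ (-(3 / 2) : ℝ) ≤ 2 / √S := by
  rw [← integral_rpow_neg_three_halves hS]
  refine setIntegral_mono_set (integrableOn_rpow_neg_three_halves hS) ?_ hs.eventuallyLE
  exact ae_restrict_of_forall_mem measurableSet_Ioi fun t ht => Real.rpow_nonneg (hS.trans ht).le _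

lemma rpow_neg_three_halves {t : ℝ} (ht : 0 < t) : t ^ (-(3 / 2) : ℝ) = √t / (t * t) := by
  have h : t * t = t ^ (2 : ℝ) := by norm_cast; ring
  rw [Real.sqrt_eq_rpow, h, ← Real.rpow_sub ht]
  norm_num

end TimeIntervals

section Deviation

/-- On the time set `s`, the curve `γ` stays within `β √t` of the uniform motion `t ↦ t a`. Curves
of bounded renormalized action have this property, and it makes `U(γ t) - U(t a)` decay like
`t ^ (-3/2)`. -/
def DeviatesAtMost (a : Conf d N) (β : ℝ) (s : Set ℝ) (γ : ℝ → Conf d N) : Prop :=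
  ∀ t ∈ s, ‖γ t - t • a‖ ≤ β * √t

variable {m : Fin N → ℝ} {a : Conf d N} {α β δ S t : ℝ} {s : Set ℝ} {y : Conf d N}
  {γ : ℝ → Conf d N}

lemma div_sq_eq_mul_rpow (ht : 0 < t) :
    2 * (β * √t) / (δ * t * (α * t)) = 2 * β / (δ * α) * t ^ (-(3 / 2) : ℝ) := by
  rw [rpow_neg_three_halves ht, mul_mul_mul_comm, ← mul_assoc, mul_div_mul_comm]

lemma abs_U_sub_U_smul_le (hm : ∀ i, 0 ≤ m i) (hα : 0 < α) (hδ : 0 < δ) (ha : Separated α a)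
    (ht : 0 < t) (hy : Separated (δ * t) y) (hdev : ‖y - t • a‖ ≤ β * √t) :
    |U m y - U m (t • a)| ≤ pairMass m * (2 * β / (δ * α)) * t ^ (-(3 / 2) : ℝ) := by
  have hta : Separated (α * t) (t • a) := mul_comm t α ▸ ha.smul ht.le
  have hP := pairMass_nonneg hm
  calc |U m y - U m (t • a)| ≤ pairMass m * (2 * ‖y - t • a‖ / (δ * t * (α * t))) :=
        abs_U_sub_U_le_of_separated hm (mul_pos hδ ht) (mul_pos hα ht) hy hta
    _ ≤ pairMass m * (2 * (β * √t) / (δ * t * (α * t))) := by gcongr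
    _ = _ := by rw [div_sq_eq_mul_rpow ht, mul_assoc]

lemma U_smul_sub_U_le (hm : ∀ i, 0 ≤ m i) (hα : 0 < α) (ha : Separated α a) (ht : 0 < t)
    (hy : ¬ collision y) (hdev : ‖y - t • a‖ ≤ β * √t) :
    U m (t • a) - U m y ≤ pairMass m * (2 * β / (α * α)) * t ^ (-(3 / 2) : ℝ) := by
  have hta : Separated (α * t) (t • a) := mul_comm t α ▸ ha.smul ht.le
  have hP := pairMass_nonneg hm
  calc U m (t • a) - U m y ≤ pairMass m * (2 * ‖y - t • a‖ / (α * t * (α * t))) := by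
        rw [norm_sub_rev]
        exact U_sub_U_le_of_not_collision hm (mul_pos hα ht) hta hy
    _ ≤ pairMass m * (2 * (β * √t) / (α * t * (α * t))) := by gcongr
    _ = _ := by rw [div_sq_eq_mul_rpow ht, mul_assoc]

lemma separated_of_deviation_le (ha : Separated α a) (ht : 0 < t) (hβ : 4 * β ≤ α * √t)
    (hdev : ‖y - t • a‖ ≤ β * √t) : Separated (α / 2 * t) y := by
  refine (ha.smul ht.le).perturb ?_
  have : 4 * β * √t ≤ α * t :=
    calc 4 * β * √t ≤ α * √t * √t := by gcongr
      _ = α * t := by rw [mul_assoc, Real.mul_self_sqrt ht.le]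
  linarith

lemma DeviatesAtMost.exists_linear_separation (hγ : Continuous γ)
    (hcol : ∀ t, 1 ≤ t → ¬ collision (γ t)) (ha : ¬ collision a)
    (hdev : DeviatesAtMost a β (Ioi 1) γ) :
    ∃ δ : ℝ, 0 < δ ∧ ∀ t, 1 ≤ t → Separated (δ * t) (γ t) := by
  obtain ⟨α, hα, hsep⟩ := exists_separated ha
  obtain ⟨T, hT⟩ : ∃ T, ∀ t ≥ T, 1 < t ∧ 4 * β / α ≤ √t :=
    eventually_atTop.1 ((eventually_gt_atTop 1).and
      (Real.tendsto_sqrt_atTop.eventually_ge_atTop (4 * β / α)))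
  have hT0 : 0 < T := one_pos.trans (hT T le_rfl).1
  obtain ⟨c, hc, hcsep⟩ := exists_separated_of_isCompact (isCompact_Icc (a := 1) (b := T))
    hγ.continuousOn fun t ht => hcol t ht.1
  refine ⟨min (α / 2) (c / T), by positivity, fun t ht i j hij => ?_⟩
  have ht0 : 0 < t := one_pos.trans_le ht
  rcases le_total t T with htT | htT
  · calc min (α / 2) (c / T) * t ≤ c / T * T := by
          gcongr
          exact min_le_right _ _
      _ = c := div_mul_cancel₀ c hT0.ne'
      _ ≤ ‖γ t i - γ t j‖ := hcsep t ⟨ht, htT⟩ i j hij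
  · obtain ⟨ht1, hβ⟩ := hT t htT
    calc min (α / 2) (c / T) * t ≤ α / 2 * t := by
          gcongr
          exact min_le_left _ _
      _ ≤ ‖γ t i - γ t j‖ :=
        separated_of_deviation_le hsep ht0 ((div_le_iff₀' hα).1 hβ) (hdev t ht1) i j hij

lemma DeviatesAtMost.integrableOn_U_sub (hm : ∀ i, 0 ≤ m i) (hα : 0 < α) (hδ : 0 < δ)
    (ha : Separated α a) (hS : 0 < S) (hγ : Continuous γ) (hdev : DeviatesAtMost a β (Ioi S) γ)
    (hsep : ∀ t ∈ Ioi S, Separated (δ * t) (γ t)) :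
    IntegrableOn (fun t => U m (γ t) - U m (t • a)) (Ioi S) := by
  refine ((integrableOn_rpow_neg_three_halves hS).const_mul
    (pairMass m * (2 * β / (δ * α)))).mono' ?_ ?_
  · exact (((measurable_U m).comp hγ.measurable).sub
      ((measurable_U m).comp (by fun_prop))).aestronglyMeasurable
  · exact ae_restrict_of_forall_mem measurableSet_Ioi fun t ht =>
      abs_U_sub_U_smul_le hm hα hδ ha (hS.trans ht) (hsep t ht) (hdev t ht)

lemma DeviatesAtMost.integral_U_sub_le (hm : ∀ i, 0 ≤ m i) (hα : 0 < α) (hδ : 0 < δ)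
    (ha : Separated α a) (hS : 0 < S) (hγ : Continuous γ) (hdev : DeviatesAtMost a β (Ioi S) γ)
    (hsep : ∀ t ∈ Ioi S, Separated (δ * t) (γ t)) :
    ∫ t in Ioi S, (U m (γ t) - U m (t • a)) ≤ pairMass m * (2 * β / (δ * α)) * (2 / √S) := by
  rw [← integral_rpow_neg_three_halves hS, ← integral_const_mul]
  refine setIntegral_mono_on (hdev.integrableOn_U_sub hm hα hδ ha hS hγ hsep)
    ((integrableOn_rpow_neg_three_halves hS).const_mul _) measurableSet_Ioi fun t ht => ?_
  exact (le_abs_self _).trans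
    (abs_U_sub_U_smul_le hm hα hδ ha (hS.trans ht) (hsep t ht) (hdev t ht))

end Deviation

section FiniteEnergy

lemma sq_norm_integral_le {Ω E : Type*} [MeasurableSpace Ω] {μ : Measure Ω} [IsFiniteMeasure μ]
    [NormedAddCommGroup E] [NormedSpace ℝ E] [CompleteSpace E] {f : Ω → E} (hf : MemLp f 2 μ) :
    ‖∫ ω, f ω ∂μ‖ ^ 2 ≤ μ.real univ * ∫ ω, ‖f ω‖ ^ 2 ∂μ := by
  rcases eq_zero_or_neZero μ with rfl | hμ
  · simp
  have hpos : 0 < μ.real univ := measureReal_univ_pos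
  have hconv : ConvexOn ℝ univ fun v : E => ‖v‖ ^ 2 :=
    convexOn_univ_norm.pow (fun _ _ => norm_nonneg _) 2
  have hjensen := hconv.map_average_le (by fun_prop) isClosed_univ (by simp)
    (hf.integrable one_le_two) (hf.integrable_norm_pow two_ne_zero)
  simp only [average_eq, norm_smul, norm_inv, Real.norm_of_nonneg hpos.le, smul_eq_mul,
    mul_pow, inv_pow] at hjensen
  field_simp at hjensen
  exact hjensen

variable {m : Fin N → ℝ} {t₀ t : ℝ} {T : EReal} {φ φ' : ℝ → Conf d N}

lemma Dnorm_nonneg (m : Fin N → ℝ) (t₀ : ℝ) (T : EReal) (φ' : ℝ → Conf d N) :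
    0 ≤ Dnorm m t₀ T φ' := Real.sqrt_nonneg _

lemma Dnorm_sq (m : Fin N → ℝ) (t₀ : ℝ) (T : EReal) (φ' : ℝ → Conf d N) :
    Dnorm m t₀ T φ' ^ 2 = ∫ t in timeSet t₀ T, mnorm m (φ' t) ^ 2 :=
  Real.sq_sqrt (integral_nonneg fun _ => sq_nonneg _)

lemma InD.mono {S : EReal} (h : InD m t₀ T φ φ') (hST : S ≤ T) : InD m t₀ S φ φ' :=
  ⟨h.1, fun t ht htS => h.2.1 t ht (htS.trans_le hST),
    fun t ht htS => h.2.2.1 t ht (htS.trans_le hST),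
    fun t ht htS => h.2.2.2.1 t ht (htS.trans_le hST),
    h.2.2.2.2.mono_set (timeSet_mono t₀ hST)⟩

lemma InD.memLp_two (hm : ∀ i, 0 < m i) (h : InD m t₀ T φ φ') {s : Set ℝ}
    (hs : s ⊆ timeSet t₀ T) (hmeas : AEStronglyMeasurable φ' (volume.restrict s)) :
    MemLp φ' 2 (volume.restrict s) := by
  refine (memLp_two_iff_integrable_sq_norm hmeas).2 ?_
  refine ((h.2.2.2.2.mono_set hs).const_mul (∑ i, (m i)⁻¹)).mono' (hmeas.norm.pow 2) ?_
  refine Eventually.of_forall fun t => ?_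
  rw [Real.norm_of_nonneg (sq_nonneg _)]
  exact norm_sq_le_mul_mnorm_sq hm (φ' t)

lemma InD.norm_le (hm : ∀ i, 0 < m i) (h : InD m t₀ T φ φ') (ht : t₀ ≤ t)
    (htT : (t : EReal) < T) :
    ‖φ t‖ ≤ √(∑ i, (m i)⁻¹) * Dnorm m t₀ T φ' * √(t - t₀) := by
  have hsub := Ioc_subset_timeSet (t₀ := t₀) htT
  have hsum : 0 ≤ ∑ i, (m i)⁻¹ := Finset.sum_nonneg fun i _ => (inv_pos.2 (hm i)).le
  have hLp := h.memLp_two hm hsub (h.2.2.2.1 t ht htT).aestronglyMeasurable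
  have hkin : ∫ s in Ioc t₀ t, ‖φ' s‖ ^ 2 ≤ (∑ i, (m i)⁻¹) * Dnorm m t₀ T φ' ^ 2 :=
    calc ∫ s in Ioc t₀ t, ‖φ' s‖ ^ 2 ≤ ∫ s in Ioc t₀ t, (∑ i, (m i)⁻¹) * mnorm m (φ' s) ^ 2 :=
          integral_mono (hLp.integrable_norm_pow two_ne_zero)
            ((h.2.2.2.2.mono_set hsub).const_mul _) fun s => norm_sq_le_mul_mnorm_sq hm (φ' s)
      _ = (∑ i, (m i)⁻¹) * ∫ s in Ioc t₀ t, mnorm m (φ' s) ^ 2 := integral_const_mul _ _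
      _ ≤ (∑ i, (m i)⁻¹) * Dnorm m t₀ T φ' ^ 2 := by
        rw [Dnorm_sq]
        exact mul_le_mul_of_nonneg_left (setIntegral_mono_set h.2.2.2.2
          (Eventually.of_forall fun s => sq_nonneg _) hsub.eventuallyLE) hsum
  refine le_of_sq_le_sq ?_ (by positivity [Dnorm_nonneg m t₀ T φ'])
  calc ‖φ t‖ ^ 2 = ‖∫ s in Ioc t₀ t, φ' s‖ ^ 2 := by rw [← h.2.2.1 t ht htT]
    _ ≤ (t - t₀) * ∫ s in Ioc t₀ t, ‖φ' s‖ ^ 2 := by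
      simpa only [measureReal_restrict_apply_univ, Real.volume_real_Ioc_of_le ht]
        using sq_norm_integral_le hLp
    _ ≤ (t - t₀) * ((∑ i, (m i)⁻¹) * Dnorm m t₀ T φ' ^ 2) :=
      mul_le_mul_of_nonneg_left hkin (sub_nonneg.2 ht)
    _ = (√(∑ i, (m i)⁻¹) * Dnorm m t₀ T φ' * √(t - t₀)) ^ 2 := by
      rw [mul_pow, mul_pow, Real.sq_sqrt hsum, Real.sq_sqrt (sub_nonneg.2 ht), mul_comm]

lemma InD.integrableOn_deriv (hm : ∀ i, 0 < m i) {S : ℝ} (h : InD m t₀ S φ φ') :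
    IntegrableOn φ' (Ioo t₀ S) := by
  obtain ⟨u, -, huS, hu⟩ := exists_seq_strictMono_tendsto S
  have hcover : AECover (volume.restrict (Ioo t₀ S)) atTop fun n => Ioc t₀ (u n) :=
    aecover_Ioo_of_Ioc tendsto_const_nhds hu
  have hmeas : AEStronglyMeasurable φ' (volume.restrict (Ioo t₀ S)) := by
    refine hcover.aestronglyMeasurable fun n => ?_
    refine AEStronglyMeasurable.mono_measure ?_
      (Measure.restrict_mono_measure Measure.restrict_le_self _)
    rcases le_total t₀ (u n) with hn | hn
    · exact (h.2.2.2.1 (u n) hn (EReal.coe_lt_coe_iff.2 (huS n))).aestronglyMeasurable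
    · simp [Ioc_eq_empty hn.not_gt]
  exact (h.memLp_two hm (timeSet_coe t₀ S).ge hmeas).integrable one_le_two

end FiniteEnergy

section Action

/-- The pair `(φ, φ')` belongs to `D₀^{1,2}(1, T)` and has finite renormalized action
`A_{x,[1,T]}(φ)`, which is then the integral of `hypIntegrand` over `(1, T)`. -/
def Admissible (m : Fin N → ℝ) (a x : Conf d N) (T : EReal) (φ φ' : ℝ → Conf d N) : Prop :=
  InD m 1 T φ φ' ∧ IntegrableOn (hypIntegrand m a x φ φ') (timeSet 1 T) ∧
    ∀ᵐ t ∂volume.restrict (timeSet 1 T), ¬ collision (hypCurve a x φ t)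

variable {m : Fin N → ℝ} {a x : Conf d N} {T : EReal} {φ φ' : ℝ → Conf d N} {α β δ b S : ℝ}

lemma hypInf_le (h : Admissible m a x T φ φ') :
    hypInf m a x T ≤ ((∫ t in timeSet 1 T, hypIntegrand m a x φ φ' t : ℝ) : EReal) := by
  rw [hypInf]
  refine iInf_le_of_le φ (iInf_le_of_le φ' (iInf_le_of_le h.1 ?_))
  rw [hypAction, if_pos h.2]

lemma exists_admissible_of_hypInf_lt {r : ℝ} (h : hypInf m a x T < r) :
    ∃ φ φ', Admissible m a x T φ φ' ∧ ∫ t in timeSet 1 T, hypIntegrand m a x φ φ' t < r := by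
  simp only [hypInf, iInf_lt_iff] at h
  obtain ⟨φ, φ', hD, h⟩ := h
  rw [hypAction] at h
  split_ifs at h with hc
  · exact ⟨φ, φ', ⟨hD, hc⟩, EReal.coe_lt_coe_iff.1 h⟩
  · exact absurd h not_top_lt

lemma le_hypInf {c : ℝ}
    (h : ∀ φ φ', Admissible m a x T φ φ' → c ≤ ∫ t in timeSet 1 T, hypIntegrand m a x φ φ' t) :
    (c : EReal) ≤ hypInf m a x T := by
  refine EReal.le_of_forall_lt_iff_le.1 fun r hr => ?_
  obtain ⟨φ, φ', hA, hlt⟩ := exists_admissible_of_hypInf_lt hr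
  exact EReal.coe_le_coe_iff.2 ((h φ φ' hA).trans hlt.le)

lemma hypCurve_sub_smul (a x : Conf d N) (φ : ℝ → Conf d N) (t : ℝ) :
    hypCurve a x φ t - t • a = φ t + (x - a) := by
  rw [hypCurve]; abel

lemma continuous_hypCurve (hφ : Continuous φ) : Continuous (hypCurve a x φ) := by
  unfold hypCurve; fun_prop

lemma hypIntegrand_eq (m : Fin N → ℝ) (a x : Conf d N) (φ φ' : ℝ → Conf d N) :
    hypIntegrand m a x φ φ' =
      fun t => mnorm m (φ' t) ^ 2 / 2 + (U m (hypCurve a x φ t) - U m (t • a)) :=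
  funext fun _ => add_sub_assoc _ _ _

lemma InD.deviatesAtMost (hm : ∀ i, 0 < m i) (h : InD m 1 T φ φ') (a x : Conf d N) :
    DeviatesAtMost a (√(∑ i, (m i)⁻¹) * Dnorm m 1 T φ' + ‖x - a‖) (timeSet 1 T)
      (hypCurve a x φ) := fun t ht => by
  have ht1 : 1 ≤ √t := Real.one_le_sqrt.2 ht.1.le
  have hD := Dnorm_nonneg m 1 T φ'
  calc ‖hypCurve a x φ t - t • a‖ = ‖φ t + (x - a)‖ := by rw [hypCurve_sub_smul]
    _ ≤ ‖φ t‖ + ‖x - a‖ := norm_add_le _ _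
    _ ≤ √(∑ i, (m i)⁻¹) * Dnorm m 1 T φ' * √(t - 1) + ‖x - a‖ := by
      gcongr
      exact h.norm_le hm ht.1.le ht.2
    _ ≤ √(∑ i, (m i)⁻¹) * Dnorm m 1 T φ' * √t + ‖x - a‖ * √t := by
      gcongr
      · linarith
      · exact le_mul_of_one_le_right (norm_nonneg _) ht1
    _ = _ := (add_mul _ _ _).symm

lemma Admissible.le_setIntegral (hm : ∀ i, 0 ≤ m i) (hα : 0 < α) (ha : Separated α a)
    (h : Admissible m a x T φ φ') (hβ : 0 ≤ β)
    (hdev : DeviatesAtMost a β (timeSet 1 T) (hypCurve a x φ)) (hS : 0 < S) {s : Set ℝ}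
    (hsT : s ⊆ timeSet 1 T) (hsS : s ⊆ Ioi S) :
    (∫ t in s, mnorm m (φ' t) ^ 2) / 2 - pairMass m * (2 * β / (α * α)) * (2 / √S) ≤
      ∫ t in s, hypIntegrand m a x φ φ' t := by
  have hkin : IntegrableOn (fun t => mnorm m (φ' t) ^ 2 / 2) s :=
    (h.1.2.2.2.2.mono_set hsT).div_const 2
  have hrpow := ((integrableOn_rpow_neg_three_halves hS).mono_set hsS).const_mul
    (pairMass m * (2 * β / (α * α)))
  have hpointwise : ∀ᵐ t ∂volume.restrict s,
      mnorm m (φ' t) ^ 2 / 2 - pairMass m * (2 * β / (α * α)) * t ^ (-(3 / 2) : ℝ) ≤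
        hypIntegrand m a x φ φ' t := by
    refine ae_restrict_of_ae_restrict_of_subset hsT ?_
    filter_upwards [h.2.2, ae_restrict_mem (measurableSet_timeSet 1 T)] with t hcol ht
    have := U_smul_sub_U_le hm hα ha (one_pos.trans ht.1) hcol (hdev t ht)
    rw [hypIntegrand]
    linarith
  have hP := pairMass_nonneg hm
  calc (∫ t in s, mnorm m (φ' t) ^ 2) / 2 - pairMass m * (2 * β / (α * α)) * (2 / √S)
      ≤ (∫ t in s, mnorm m (φ' t) ^ 2) / 2 -
          pairMass m * (2 * β / (α * α)) * ∫ t in s, t ^ (-(3 / 2) : ℝ) := by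
        gcongr
        exact setIntegral_rpow_neg_three_halves_le hS hsS
    _ = ∫ t in s, (mnorm m (φ' t) ^ 2 / 2 -
          pairMass m * (2 * β / (α * α)) * t ^ (-(3 / 2) : ℝ)) := by
        rw [integral_sub hkin hrpow, integral_div, integral_const_mul]
    _ ≤ ∫ t in s, hypIntegrand m a x φ φ' t :=
        setIntegral_mono_ae_restrict (hkin.sub hrpow) (h.2.1.mono_set hsT) hpointwise

lemma exists_coercive (hm : ∀ i, 0 < m i) (ha : ¬ collision a) (hb : 0 ≤ b) :
    ∃ C : ℝ, ∀ x : Conf d N, ‖x - a‖ ≤ b → ∀ (T : EReal) (φ φ' : ℝ → Conf d N),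
      Admissible m a x T φ φ' →
      Dnorm m 1 T φ' ^ 2 / 4 - C ≤ ∫ t in timeSet 1 T, hypIntegrand m a x φ φ' t := by
  obtain ⟨α, hα, hsep⟩ := exists_separated ha
  set κ := √(∑ i, (m i)⁻¹)
  set c := 4 * pairMass m / (α * α)
  refine ⟨(c * κ) ^ 2 + c * b, fun x hx T φ φ' hA => ?_⟩
  set D := Dnorm m 1 T φ' with hD
  have hdev : DeviatesAtMost a (κ * D + b) (timeSet 1 T) (hypCurve a x φ) := fun t ht =>
    (hA.1.deviatesAtMost hm a x t ht).trans (by gcongr)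
  have hβ : 0 ≤ κ * D + b := by positivity [Dnorm_nonneg m 1 T φ']
  -- The error term is linear in `D`, hence absorbed by half of the kinetic energy `D ^ 2 / 2`.
  calc D ^ 2 / 4 - ((c * κ) ^ 2 + c * b)
      ≤ D ^ 2 / 4 - ((c * κ) ^ 2 + c * b) + (D / 2 - c * κ) ^ 2 :=
        le_add_of_nonneg_right (sq_nonneg _)
    _ = D ^ 2 / 2 - pairMass m * (2 * (κ * D + b) / (α * α)) * (2 / √1) := by
        rw [Real.sqrt_one]; ring
    _ = (∫ t in timeSet 1 T, mnorm m (φ' t) ^ 2) / 2 -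
          pairMass m * (2 * (κ * D + b) / (α * α)) * (2 / √1) := by rw [hD, Dnorm_sq]
    _ ≤ ∫ t in timeSet 1 T, hypIntegrand m a x φ φ' t :=
        hA.le_setIntegral (fun i => (hm i).le) hα hsep hβ hdev one_pos subset_rfl
          (timeSet_subset_Ioi 1 T)

lemma exists_deviation_bound (hm : ∀ i, 0 < m i) (ha : ¬ collision a) (hb : 0 ≤ b) (M : ℝ) :
    ∃ β : ℝ, 0 ≤ β ∧ ∀ x : Conf d N, ‖x - a‖ ≤ b → ∀ (T : EReal) (φ φ' : ℝ → Conf d N),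
      Admissible m a x T φ φ' → ∫ t in timeSet 1 T, hypIntegrand m a x φ φ' t ≤ M →
      DeviatesAtMost a β (timeSet 1 T) (hypCurve a x φ) := by
  obtain ⟨C, hC⟩ := exists_coercive hm ha hb
  refine ⟨√(∑ i, (m i)⁻¹) * √(4 * (M + C)) + b, by positivity, fun x hx T φ φ' hA hM t ht => ?_⟩
  have hD : Dnorm m 1 T φ' ≤ √(4 * (M + C)) :=
    Real.le_sqrt_of_sq_le (by linarith [hC x hx T φ φ' hA])
  exact (hA.1.deviatesAtMost hm a x t ht).trans (by gcongr)

lemma hypInf_ne_bot (hm : ∀ i, 0 < m i) (ha : ¬ collision a) (x : Conf d N) (T : EReal) :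
    hypInf m a x T ≠ ⊥ := by
  obtain ⟨C, hC⟩ := exists_coercive hm ha (norm_nonneg (x - a))
  have h : ((-C : ℝ) : EReal) ≤ hypInf m a x T := le_hypInf fun φ φ' hA => by
    linarith [hC x le_rfl T φ φ' hA, sq_nonneg (Dnorm m 1 T φ')]
  exact ((EReal.bot_lt_coe _).trans_le h).ne'

lemma integrableOn_hypIntegrand_Ioi (hm : ∀ i, 0 ≤ m i) (hα : 0 < α) (hδ : 0 < δ)
    (ha : Separated α a) (hS : 0 < S) (hφ : Continuous φ)
    (hkin : IntegrableOn (fun t => mnorm m (φ' t) ^ 2) (Ioi S))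
    (hdev : DeviatesAtMost a β (Ioi S) (hypCurve a x φ))
    (hsep : ∀ t ∈ Ioi S, Separated (δ * t) (hypCurve a x φ t)) :
    IntegrableOn (hypIntegrand m a x φ φ') (Ioi S) := by
  rw [hypIntegrand_eq]
  exact (hkin.div_const 2).add
    (hdev.integrableOn_U_sub hm hα hδ ha hS (continuous_hypCurve hφ) hsep)

lemma integral_hypIntegrand_Ioi_le (hm : ∀ i, 0 ≤ m i) (hα : 0 < α) (hδ : 0 < δ)
    (ha : Separated α a) (hS : 0 < S) (hφ : Continuous φ)
    (hkin : IntegrableOn (fun t => mnorm m (φ' t) ^ 2) (Ioi S))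
    (hdev : DeviatesAtMost a β (Ioi S) (hypCurve a x φ))
    (hsep : ∀ t ∈ Ioi S, Separated (δ * t) (hypCurve a x φ t)) :
    ∫ t in Ioi S, hypIntegrand m a x φ φ' t ≤
      (∫ t in Ioi S, mnorm m (φ' t) ^ 2) / 2 + pairMass m * (2 * β / (δ * α)) * (2 / √S) := by
  have hγ : Continuous (hypCurve a x φ) := continuous_hypCurve hφ
  rw [hypIntegrand_eq, integral_add (hkin.div_const 2)
    (hdev.integrableOn_U_sub hm hα hδ ha hS hγ hsep), integral_div]
  gcongr
  exact hdev.integral_U_sub_le hm hα hδ ha hS hγ hsep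

end Action

section Truncation

variable {m : Fin N → ℝ} {a x : Conf d N} {φ φ' : ℝ → Conf d N} {t₀ t S α β : ℝ}

lemma Admissible.restrict (hm : ∀ i, 0 ≤ m i) (hα : 0 < α) (ha : Separated α a)
    (h : Admissible m a x ⊤ φ φ') (hβ : 0 ≤ β)
    (hdev : DeviatesAtMost a β (timeSet 1 ⊤) (hypCurve a x φ)) (hS : 1 ≤ S) :
    Admissible m a x S φ φ' ∧
      ∫ t in timeSet 1 S, hypIntegrand m a x φ φ' t ≤
        (∫ t in timeSet 1 ⊤, hypIntegrand m a x φ φ' t) +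
          pairMass m * (2 * β / (α * α)) * (2 / √S) := by
  have hsub : timeSet 1 (S : EReal) ⊆ timeSet 1 ⊤ := timeSet_mono 1 le_top
  refine ⟨⟨h.1.mono le_top, h.2.1.mono_set hsub,
    ae_restrict_of_ae_restrict_of_subset hsub h.2.2⟩, ?_⟩
  have htail := h.le_setIntegral hm hα ha hβ hdev (one_pos.trans_le hS)
    (timeSet_top 1 ▸ Ioi_subset_Ioi hS) (subset_refl (Ioi S))
  have hkin : 0 ≤ ∫ t in Ioi S, mnorm m (φ' t) ^ 2 := integral_nonneg fun t => sq_nonneg _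
  rw [setIntegral_timeSet_top_eq_add hS h.2.1]
  linarith

/-- The velocity `φ'` on `(t₀, S)`, and `0` elsewhere. -/
def stoppedVelocity (t₀ S : ℝ) (φ' : ℝ → Conf d N) : ℝ → Conf d N := (Ioo t₀ S).indicator φ'

/-- The curve with velocity `φ'` starting from `0` at time `t₀` and stopped at time `S`. The
associated `hypCurve` is prolonged after time `S` by a uniform motion of velocity `a`. -/
def stoppedCurve (t₀ S : ℝ) (φ' : ℝ → Conf d N) (t : ℝ) : Conf d N :=
  ∫ s in t₀..t, stoppedVelocity t₀ S φ' s

lemma stoppedVelocity_of_le (φ' : ℝ → Conf d N) (ht : S ≤ t) : stoppedVelocity t₀ S φ' t = 0 :=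
  indicator_of_notMem (fun h => h.2.not_ge ht) φ'

lemma stoppedVelocity_of_mem (φ' : ℝ → Conf d N) (ht : t ∈ timeSet t₀ (S : EReal)) :
    stoppedVelocity t₀ S φ' t = φ' t :=
  indicator_of_mem (timeSet_coe t₀ S ▸ ht) φ'

lemma InD.integrable_stoppedVelocity (hm : ∀ i, 0 < m i) (h : InD m t₀ S φ φ') :
    Integrable (stoppedVelocity t₀ S φ') :=
  (integrable_indicator_iff measurableSet_Ioo).2 (h.integrableOn_deriv hm)

lemma InD.continuous_stoppedCurve (hm : ∀ i, 0 < m i) (h : InD m t₀ S φ φ') :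
    Continuous (stoppedCurve t₀ S φ') :=
  intervalIntegral.continuous_primitive
    (fun _ _ => (h.integrable_stoppedVelocity hm).intervalIntegrable) t₀

lemma InD.stoppedCurve_of_lt (h : InD m t₀ S φ φ') (ht : t₀ ≤ t) (htS : t < S) :
    stoppedCurve t₀ S φ' t = φ t := by
  rw [stoppedCurve, intervalIntegral.integral_of_le ht,
    h.2.2.1 t ht (EReal.coe_lt_coe_iff.2 htS)]
  exact setIntegral_congr_fun measurableSet_Ioc fun s hs =>
    indicator_of_mem (show s ∈ Ioo t₀ S from ⟨hs.1, hs.2.trans_lt htS⟩) φ'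

lemma InD.stoppedCurve_of_le (hm : ∀ i, 0 < m i) (h : InD m t₀ S φ φ') (ht : S ≤ t) :
    stoppedCurve t₀ S φ' t = stoppedCurve t₀ S φ' S := by
  have hint := h.integrable_stoppedVelocity hm
  have hzero : ∫ s in S..t, stoppedVelocity t₀ S φ' s = 0 := by
    rw [intervalIntegral.integral_of_le ht]
    exact setIntegral_eq_zero_of_forall_eq_zero fun s hs => stoppedVelocity_of_le φ' hs.1.le
  rw [stoppedCurve, stoppedCurve, ← intervalIntegral.integral_add_adjacent_intervals
    (hint.intervalIntegrable (a := t₀) (b := S)) hint.intervalIntegrable, hzero, add_zero]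

lemma InD.stopped (hm : ∀ i, 0 < m i) (hS : t₀ < S) (h : InD m t₀ S φ φ') :
    InD m t₀ ⊤ (stoppedCurve t₀ S φ') (stoppedVelocity t₀ S φ') := by
  have hint := h.integrable_stoppedVelocity hm
  have hX : Icc t₀ S ⊆ {t | inX m (stoppedCurve t₀ S φ' t)} := by
    rw [← closure_Ico hS.ne]
    refine closure_minimal (fun t ht => ?_)
      ((isClosed_setOf_inX m).preimage (h.continuous_stoppedCurve hm))
    rw [mem_ofPred, h.stoppedCurve_of_lt ht.1 ht.2]
    exact h.2.1 t ht.1 (EReal.coe_lt_coe_iff.2 ht.2)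
  refine ⟨intervalIntegral.integral_same, fun t ht _ => ?_,
    fun t ht _ => intervalIntegral.integral_of_le ht, fun t _ _ => hint.integrableOn, ?_⟩
  · rcases le_total t S with htS | htS
    · exact hX ⟨ht, htS⟩
    · rw [h.stoppedCurve_of_le hm htS]
      exact hX (right_mem_Icc.2 hS.le)
  · refine (integrableOn_timeSet_top_iff hS.le).2
      ⟨h.2.2.2.2.congr_fun (fun t ht => ?_) (measurableSet_timeSet t₀ S),
        integrableOn_zero.congr_fun (fun t ht => ?_) measurableSet_Ioi⟩
    · simp only [stoppedVelocity_of_mem φ' ht]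
    · simp [stoppedVelocity_of_le φ' (le_of_lt ht)]

lemma InD.deviatesAtMost_stoppedCurve (hm : ∀ i, 0 < m i) (hS : 1 < S) (h : InD m 1 S φ φ')
    (hβ : 0 ≤ β) (hdev : DeviatesAtMost a β (timeSet 1 S) (hypCurve a x φ)) :
    DeviatesAtMost a β (Ioi S) (hypCurve a x (stoppedCurve 1 S φ')) := by
  have hcont := h.continuous_stoppedCurve hm
  have hIcc : Icc 1 S ⊆ {t | ‖stoppedCurve 1 S φ' t + (x - a)‖ ≤ β * √t} := by
    rw [← closure_Ioo hS.ne]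
    refine closure_minimal (fun t ht => ?_) (isClosed_le (by fun_prop) (by fun_prop))
    rw [mem_ofPred, h.stoppedCurve_of_lt ht.1.le ht.2, ← hypCurve_sub_smul]
    exact hdev t (timeSet_coe 1 S ▸ ht)
  intro t ht
  rw [hypCurve_sub_smul, h.stoppedCurve_of_le hm (le_of_lt ht)]
  calc ‖stoppedCurve 1 S φ' S + (x - a)‖ ≤ β * √S := hIcc (right_mem_Icc.2 hS.le)
    _ ≤ β * √t := by gcongr; exact le_of_lt ht

lemma InD.hypCurve_stoppedCurve_eqOn (h : InD m 1 S φ φ') (a x : Conf d N) :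
    EqOn (hypCurve a x (stoppedCurve 1 S φ')) (hypCurve a x φ) (timeSet 1 S) := fun t ht => by
  rw [hypCurve, hypCurve, h.stoppedCurve_of_lt ht.1.le (EReal.coe_lt_coe_iff.1 ht.2)]

lemma InD.hypIntegrand_stoppedCurve_eqOn (h : InD m 1 S φ φ') (a x : Conf d N) :
    EqOn (hypIntegrand m a x (stoppedCurve 1 S φ') (stoppedVelocity 1 S φ'))
      (hypIntegrand m a x φ φ') (timeSet 1 S) := fun t ht => by
  rw [hypIntegrand, hypIntegrand, stoppedVelocity_of_mem φ' ht,
    h.hypCurve_stoppedCurve_eqOn a x ht]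

lemma Admissible.stopped (hm : ∀ i, 0 < m i) (hα : 0 < α) (ha : Separated α a) (hS : 1 < S)
    (h : Admissible m a x S φ φ') (hβ : 0 ≤ β)
    (hdev : DeviatesAtMost a β (timeSet 1 S) (hypCurve a x φ)) (hβS : 4 * β ≤ α * √S) :
    Admissible m a x ⊤ (stoppedCurve 1 S φ') (stoppedVelocity 1 S φ') ∧
      ∫ t in timeSet 1 ⊤, hypIntegrand m a x (stoppedCurve 1 S φ') (stoppedVelocity 1 S φ') t ≤
        (∫ t in timeSet 1 S, hypIntegrand m a x φ φ' t) +
          pairMass m * (2 * β / (α / 2 * α)) * (2 / √S) := by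
  have hS0 : 0 < S := one_pos.trans hS
  have hm' : ∀ i, 0 ≤ m i := fun i => (hm i).le
  have hD := h.1.stopped hm hS
  have hcont := h.1.continuous_stoppedCurve hm
  have hmeas := measurableSet_timeSet 1 (S : EReal)
  have heq := h.1.hypIntegrand_stoppedCurve_eqOn a x
  have hkin := ((integrableOn_timeSet_top_iff hS.le).1 hD.2.2.2.2).2
  have hkin0 : ∫ t in Ioi S, mnorm m (stoppedVelocity 1 S φ' t) ^ 2 = 0 :=
    setIntegral_eq_zero_of_forall_eq_zero fun t ht => by
      rw [stoppedVelocity_of_le φ' (le_of_lt ht), mnorm_zero, zero_pow two_ne_zero]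
  have hdevS := h.1.deviatesAtMost_stoppedCurve hm hS hβ hdev
  have hsep : ∀ t ∈ Ioi S, Separated (α / 2 * t) (hypCurve a x (stoppedCurve 1 S φ') t) :=
    fun t ht => separated_of_deviation_le ha (hS0.trans ht)
      (hβS.trans (by gcongr; exact le_of_lt ht)) (hdevS t ht)
  have hint : IntegrableOn (hypIntegrand m a x (stoppedCurve 1 S φ') (stoppedVelocity 1 S φ'))
      (timeSet 1 ⊤) := (integrableOn_timeSet_top_iff hS.le).2
    ⟨h.2.1.congr_fun heq.symm hmeas,
      integrableOn_hypIntegrand_Ioi hm' hα (half_pos hα) ha hS0 hcont hkin hdevS hsep⟩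
  refine ⟨⟨hD, hint, ?_⟩, ?_⟩
  · rw [restrict_timeSet_top_eq_add hS.le, ae_add_measure_iff]
    constructor
    · filter_upwards [h.2.2, ae_restrict_mem hmeas] with t hcol ht
      rwa [h.1.hypCurve_stoppedCurve_eqOn a x ht]
    · exact ae_restrict_of_forall_mem measurableSet_Ioi fun t ht =>
        (hsep t ht).not_collision (mul_pos (half_pos hα) (hS0.trans ht))
  · have htail := integral_hypIntegrand_Ioi_le hm' hα (half_pos hα) ha hS0 hcont hkin hdevS hsep
    rw [setIntegral_timeSet_top_eq_add hS.le hint, setIntegral_congr_fun hmeas heq]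
    linarith

end Truncation

section Detour

variable {m : Fin N → ℝ} {a x x₀ q : Conf d N} {t α : ℝ}

lemma exists_forall_ne_line {ι E : Type*} [Countable ι] [NormedAddCommGroup E] [NormedSpace ℝ E]
    [FiniteDimensional ℝ E] (hE : 1 < Module.finrank ℝ E) (p v : ι → E) :
    ∃ w : E, ∀ i (τ : ℝ), w ≠ p i + τ • v i := by
  let _ : MeasurableSpace E := borel E
  have _ : BorelSpace E := ⟨rfl⟩
  let line (i : ι) : AffineSubspace ℝ E := AffineSubspace.mk' (p i) (Submodule.span ℝ {v i})
  have hline : ∀ i, line i ≠ ⊤ := fun i htop => by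
    have hdir : (line i).direction = Submodule.span ℝ {v i} := AffineSubspace.direction_mk' _ _
    have hspan : Submodule.span ℝ {v i} = ⊤ := by rw [← hdir, htop, AffineSubspace.direction_top]
    have := finrank_span_le_card (R := ℝ) ({v i} : Set E)
    rw [hspan, finrank_top, toFinset_singleton, Finset.card_singleton] at this
    exact this.not_gt hE
  obtain ⟨w, hw⟩ := (ae_all_iff.2 fun i => measure_eq_zero_iff_ae_notMem.1
    (Measure.addHaar_affineSubspace Measure.addHaar (line i) (hline i))).exists
  refine ⟨w, fun i τ h => hw i ?_⟩
  rw [SetLike.mem_coe, AffineSubspace.mem_mk', h, vsub_eq_sub, add_sub_cancel_left]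
  exact Submodule.smul_mem _ _ (Submodule.mem_span_singleton_self _)

lemma exists_displacement (hd : 2 ≤ d) (hm : ∀ i, 0 < m i) (hx : ¬ collision x)
    (a : Conf d N) :
    ∃ c : Conf d N, inX m c ∧ (∀ τ : ℝ, ¬ collision (x + τ • c)) ∧
      ∀ τ : ℝ, ¬ collision (x + c + τ • a) := by
  let k (i j : Fin N) : ℝ := (i : ℝ) - (j : ℝ)
  have hk : ∀ i j, i ≠ j → k i j ≠ 0 := fun i j hij h =>
    hij (Fin.ext (by exact_mod_cast sub_eq_zero.1 h))
  obtain ⟨w, hw⟩ := exists_forall_ne_line (ι := (Fin N × Fin N) ⊕ (Fin N × Fin N))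
    (E := EuclideanSpace ℝ (Fin d)) (by rwa [finrank_euclideanSpace_fin])
    (Sum.elim (fun _ => 0) fun p => -((k p.1 p.2)⁻¹ • (x p.1 - x p.2)))
    (Sum.elim (fun p => x p.1 - x p.2) fun p => a p.1 - a p.2)
  obtain ⟨c, hcX, hc⟩ := exists_inX_forall_sub_eq hm fun i : Fin N => (i : ℝ) • w
  replace hc : ∀ i j, c i - c j = k i j • w := fun i j => by rw [hc, ← sub_smul]
  refine ⟨c, hcX, fun τ => ?_, fun τ => ?_⟩
  · rintro ⟨i, j, hij, h⟩
    have hpair : (x i - x j) + (τ * k i j) • w = 0 := by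
      rw [mul_smul, ← hc i j, smul_sub, ← sub_eq_zero.2 h, Pi.add_apply, Pi.add_apply,
        Pi.smul_apply, Pi.smul_apply, add_sub_add_comm]
    have hτ : τ ≠ 0 := fun hτ => hx ⟨i, j, hij, sub_eq_zero.1 (by simpa [hτ] using hpair)⟩
    refine hw (Sum.inl (i, j)) (-(τ * k i j)⁻¹) ?_
    rw [Sum.elim_inl, Sum.elim_inl, zero_add, eq_neg_of_add_eq_zero_left hpair, smul_neg, neg_smul,
      neg_neg, inv_smul_smul₀ (mul_ne_zero hτ (hk i j hij))]
  · rintro ⟨i, j, hij, h⟩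
    have hpair : (x i - x j) + k i j • w + τ • (a i - a j) = 0 := by
      rw [← hc i j, smul_sub, ← sub_eq_zero.2 h]
      simp only [Pi.add_apply, Pi.smul_apply]
      abel
    have hkw : k i j • w = -(x i - x j) - τ • (a i - a j) := by
      rw [← sub_eq_zero, ← hpair]; abel
    refine hw (Sum.inr (i, j)) (-((k i j)⁻¹ * τ)) ?_
    rw [Sum.elim_inr, Sum.elim_inr, ← inv_smul_smul₀ (hk i j hij) w, hkw, smul_sub, smul_neg,
      neg_smul, mul_smul, sub_eq_add_neg]

/-- The element of `D₀^{1,2}(1, ∞)` moving with velocity `q` on `[1, 2]` and at rest afterwards. -/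
def detour (q : Conf d N) (t : ℝ) : Conf d N := (min t 2 - 1) • q

/-- The velocity of `detour q`. -/
def detourVelocity (q : Conf d N) : ℝ → Conf d N := (Ioc 1 2).indicator fun _ => q

lemma continuous_detour (q : Conf d N) : Continuous (detour q) := by
  unfold detour; fun_prop

lemma norm_detour_le (q : Conf d N) (ht : 1 ≤ t) : ‖detour q t‖ ≤ ‖q‖ := by
  have h₀ : 0 ≤ min t 2 - 1 := sub_nonneg.2 (le_min ht one_le_two)
  rw [detour, norm_smul, Real.norm_of_nonneg h₀]
  exact mul_le_of_le_one_left (norm_nonneg q) (by linarith [min_le_right t 2])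

lemma inD_detour (hq : inX m q) : InD m 1 ⊤ (detour q) (detourVelocity q) := by
  have hconst {E : Type} [NormedAddCommGroup E] (v : E) :
      Integrable ((Ioc (1 : ℝ) 2).indicator fun _ => v) :=
    (integrable_indicator_iff measurableSet_Ioc).2 (integrableOn_const (by simp))
  refine ⟨by norm_num [detour], fun t _ _ => hq.smul _, fun t ht _ => ?_,
    fun t _ _ => (hconst q).integrableOn, (hconst (mnorm m q ^ 2)).integrableOn.congr_fun
      (fun t _ => ?_) (measurableSet_timeSet 1 ⊤)⟩
  · rw [detour, detourVelocity, setIntegral_indicator measurableSet_Ioc, Ioc_inter_Ioc,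
      setIntegral_const, max_self, Real.volume_real_Ioc_of_le (le_min ht one_le_two)]
  · by_cases ht : t ∈ Ioc (1 : ℝ) 2 <;> simp [detourVelocity, ht]

lemma deviatesAtMost_detour (a x q : Conf d N) :
    DeviatesAtMost a (‖q‖ + ‖x - a‖) (Ioi 1) (hypCurve a x (detour q)) := fun t ht => by
  calc ‖hypCurve a x (detour q) t - t • a‖ = ‖detour q t + (x - a)‖ := by
        rw [hypCurve_sub_smul]
    _ ≤ ‖detour q t‖ + ‖x - a‖ := norm_add_le _ _
    _ ≤ ‖q‖ + ‖x - a‖ := by gcongr; exact norm_detour_le q (le_of_lt ht)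
    _ ≤ (‖q‖ + ‖x - a‖) * √t :=
      le_mul_of_one_le_right (by positivity) (Real.one_le_sqrt.2 (le_of_lt ht))

lemma hypCurve_detour_of_le (a x c : Conf d N) (ht : t ≤ 2) :
    hypCurve a x (detour (c - a)) t = x + (t - 1) • c := by
  rw [hypCurve, detour, min_eq_left ht]; module

lemma hypCurve_detour_of_ge (a x c : Conf d N) (ht : 2 ≤ t) :
    hypCurve a x (detour (c - a)) t = x + c + (t - 2) • a := by
  rw [hypCurve, detour, min_eq_right ht]; module

lemma exists_collision_free_detour (hd : 2 ≤ d) (hm : ∀ i, 0 < m i) (ha : inX m a)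
    (hx : ¬ collision x) :
    ∃ q : Conf d N, inX m q ∧ ∀ t, ¬ collision (hypCurve a x (detour q) t) := by
  obtain ⟨c, hcX, hcx, hca⟩ := exists_displacement hd hm hx a
  refine ⟨c - a, hcX.sub ha, fun t => ?_⟩
  rcases le_total t 2 with ht | ht
  · exact hypCurve_detour_of_le a x c ht ▸ hcx (t - 1)
  · exact hypCurve_detour_of_ge a x c ht ▸ hca (t - 2)

lemma hypInf_le_of_separated_detour (hm : ∀ i, 0 ≤ m i) (hα : 0 < α) (ha : Separated α a)
    (hq : inX m q) {δ β : ℝ} (hδ : 0 < δ) (hβ : ‖q‖ + ‖x - a‖ ≤ β)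
    (hsep : ∀ t ∈ Ioi 1, Separated (δ * t) (hypCurve a x (detour q) t)) :
    hypInf m a x ⊤ ≤ (((∫ t in Ioi 1, mnorm m (detourVelocity q t) ^ 2) / 2 +
      pairMass m * (2 * β / (δ * α)) * (2 / √1) : ℝ) : EReal) := by
  have hD := inD_detour hq
  have hkin : IntegrableOn (fun t => mnorm m (detourVelocity q t) ^ 2) (Ioi 1) :=
    timeSet_top 1 ▸ hD.2.2.2.2
  have hdev : DeviatesAtMost a β (Ioi 1) (hypCurve a x (detour q)) := fun t ht =>
    (deviatesAtMost_detour a x q t ht).trans (by gcongr)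
  have hA : Admissible m a x ⊤ (detour q) (detourVelocity q) := by
    refine ⟨hD, ?_, ?_⟩ <;> rw [timeSet_top]
    · exact integrableOn_hypIntegrand_Ioi hm hα hδ ha one_pos (continuous_detour q) hkin hdev hsep
    · exact ae_restrict_of_forall_mem measurableSet_Ioi fun t ht =>
        (hsep t ht).not_collision (mul_pos hδ (one_pos.trans ht))
  refine (hypInf_le hA).trans (EReal.coe_le_coe_iff.2 ?_)
  rw [timeSet_top]
  exact integral_hypIntegrand_Ioi_le hm hα hδ ha one_pos (continuous_detour q) hkin hdev hsep

lemma exists_eventually_hypInf_top_le (hd : 2 ≤ d) (hm : ∀ i, 0 < m i) (ha : inOmega m a)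
    (hx₀ : ¬ collision x₀) : ∃ M : ℝ, ∀ᶠ x in 𝓝 x₀, hypInf m a x ⊤ ≤ (M : EReal) := by
  obtain ⟨q, hq, hcol⟩ := exists_collision_free_detour hd hm ha.1 hx₀
  obtain ⟨α, hα, hsepa⟩ := exists_separated ha.2
  obtain ⟨δ, hδ, hsep⟩ := (deviatesAtMost_detour a x₀ q).exists_linear_separation
    (continuous_hypCurve (continuous_detour q)) (fun t _ => hcol t) ha.2
  refine ⟨_, Filter.mem_of_superset (Metric.ball_mem_nhds x₀ (by positivity : 0 < δ / 4))
    fun x hx => hypInf_le_of_separated_detour (fun i => (hm i).le) hα hsepa hq (half_pos hδ)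
      (β := ‖q‖ + (δ / 4 + ‖x₀ - a‖)) ?_ fun t ht => (hsep t (le_of_lt ht)).perturb ?_⟩
  · rw [mem_ball_iff_norm] at hx
    linarith [norm_sub_le_norm_sub_add_norm_sub x x₀ a]
  · rw [mem_ball_iff_norm] at hx
    have hshift : hypCurve a x (detour q) t - hypCurve a x₀ (detour q) t = x - x₀ := by
      rw [hypCurve, hypCurve]; abel
    have : δ * 1 ≤ δ * t := mul_le_mul_of_nonneg_left (le_of_lt ht) hδ.le
    rw [hshift]
    linarith

lemma exists_forall_hypInf_top_le (hd : 2 ≤ d) (hm : ∀ i, 0 < m i) (ha : inOmega m a)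
    {K : Set (Conf d N)} (hK : IsCompact K) (hKcol : ∀ x ∈ K, ¬ collision x) :
    ∃ M : ℝ, ∀ x ∈ K, hypInf m a x ⊤ ≤ (M : EReal) := by
  refine hK.induction_on (p := fun s => ∃ M : ℝ, ∀ x ∈ s, hypInf m a x ⊤ ≤ (M : EReal))
    ⟨0, by simp⟩ (fun s s' hs ⟨M, hM⟩ => ⟨M, fun x hx => hM x (hs hx)⟩) ?_ fun x hx => ?_
  · rintro s s' ⟨M, hM⟩ ⟨M', hM'⟩
    refine ⟨max M M', fun x hx => ?_⟩
    exact hx.elim (fun hx => (hM x hx).trans (EReal.coe_le_coe_iff.2 (le_max_left _ _)))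
      fun hx => (hM' x hx).trans (EReal.coe_le_coe_iff.2 (le_max_right _ _))
  · obtain ⟨M, hM⟩ := exists_eventually_hypInf_top_le hd hm ha (hKcol x hx)
    exact ⟨{y | hypInf m a y ⊤ ≤ M}, mem_nhdsWithin_of_mem_nhds hM, M, fun y hy => hy⟩

end Detour

section Comparison

variable {m : Fin N → ℝ} {a x : Conf d N} {b : ℝ}

lemma hypInf_le_hypInf_add {S T : EReal} {M D : ℝ} (hM : hypInf m a x S ≤ (M : EReal))
    (h : ∀ φ φ', Admissible m a x S φ φ' →
      ∫ t in timeSet 1 S, hypIntegrand m a x φ φ' t ≤ M + 1 →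
      ∃ ψ ψ', Admissible m a x T ψ ψ' ∧ ∫ t in timeSet 1 T, hypIntegrand m a x ψ ψ' t ≤
        (∫ t in timeSet 1 S, hypIntegrand m a x φ φ' t) + D) :
    hypInf m a x T ≤ hypInf m a x S + D := by
  refine EReal.le_of_forall_lt_iff_le.1 fun r hr => ?_
  have hlt : hypInf m a x S < ((min (r - D) (M + 1) : ℝ) : EReal) := by
    rcases min_choice (r - D) (M + 1) with hmin | hmin <;> rw [hmin]
    · rw [EReal.coe_sub]
      exact EReal.lt_sub_iff_add_lt (by simp) (by simp) |>.2 hr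
    · exact hM.trans_lt (EReal.coe_lt_coe_iff.2 (lt_add_one M))
  obtain ⟨φ, φ', hA, hφ⟩ := exists_admissible_of_hypInf_lt hlt
  obtain ⟨ψ, ψ', hB, hψ⟩ := h φ φ' hA (hφ.le.trans (min_le_right _ _))
  exact (hypInf_le hB).trans (EReal.coe_le_coe_iff.2 (by linarith [min_le_left (r - D) (M + 1)]))

lemma exists_hypInf_le_hypInf_top_add (hm : ∀ i, 0 < m i) (ha : ¬ collision a) (hb : 0 ≤ b)
    (M : ℝ) :
    ∃ D : ℝ, 0 ≤ D ∧ ∀ x : Conf d N, ‖x - a‖ ≤ b → hypInf m a x ⊤ ≤ (M : EReal) →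
      ∀ S : ℝ, 1 ≤ S → hypInf m a x S ≤ hypInf m a x ⊤ + ((D / √S : ℝ) : EReal) := by
  obtain ⟨α, hα, hsep⟩ := exists_separated ha
  obtain ⟨β, hβ, hdev⟩ := exists_deviation_bound hm ha hb (M + 1)
  have hm' : ∀ i, 0 ≤ m i := fun i => (hm i).le
  have hP := pairMass_nonneg hm'
  refine ⟨pairMass m * (2 * β / (α * α)) * 2, by positivity, fun x hx hM S hS => ?_⟩
  refine hypInf_le_hypInf_add hM fun φ φ' hA hle => ⟨φ, φ', ?_⟩
  rw [mul_div_assoc]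
  exact hA.restrict hm' hα hsep hβ (hdev x hx ⊤ φ φ' hA hle) hS

lemma exists_hypInf_top_le_hypInf_add (hm : ∀ i, 0 < m i) (ha : ¬ collision a) (hb : 0 ≤ b)
    (M : ℝ) :
    ∃ D : ℝ, 0 ≤ D ∧ ∀ᶠ S : ℝ in atTop, ∀ x : Conf d N, ‖x - a‖ ≤ b →
      hypInf m a x S ≤ (M : EReal) →
      hypInf m a x ⊤ ≤ hypInf m a x S + ((D / √S : ℝ) : EReal) := by
  obtain ⟨α, hα, hsep⟩ := exists_separated ha
  obtain ⟨β, hβ, hdev⟩ := exists_deviation_bound hm ha hb (M + 1)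
  have hP := pairMass_nonneg fun i => (hm i).le
  refine ⟨pairMass m * (2 * β / (α / 2 * α)) * 2, by positivity, ?_⟩
  filter_upwards [eventually_gt_atTop 1,
    Real.tendsto_sqrt_atTop.eventually_ge_atTop (4 * β / α)] with S hS hβS x hx hM
  refine hypInf_le_hypInf_add hM fun φ φ' hA hle =>
    ⟨stoppedCurve 1 S φ', stoppedVelocity 1 S φ', ?_⟩
  rw [mul_div_assoc]
  exact hA.stopped hm hα hsep hS hβ (hdev x hx S φ φ' hA hle) ((div_le_iff₀' hα).1 hβS)

lemma abs_toReal_sub_toReal_le {u v : EReal} {c : ℝ} (hv : v ≠ ⊤) (hv' : v ≠ ⊥)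
    (huv : u ≤ v + c) (hvu : v ≤ u + c) : |u.toReal - v.toReal| ≤ c := by
  lift v to ℝ using ⟨hv, hv'⟩
  induction u with
  | bot => simp at hvu
  | top => exact absurd huv (not_le.2 (EReal.coe_lt_top (v + c)))
  | coe u =>
    rw [EReal.toReal_coe, EReal.toReal_coe, abs_sub_le_iff, sub_le_iff_le_add',
      sub_le_iff_le_add']
    exact ⟨EReal.coe_le_coe_iff.1 huv, EReal.coe_le_coe_iff.1 hvu⟩

lemma exists_abs_toReal_hypInf_sub_le (hd : 2 ≤ d) (hm : ∀ i, 0 < m i) (ha : inOmega m a)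
    {K : Set (Conf d N)} (hK : IsCompact K) (hKcol : ∀ x ∈ K, ¬ collision x) :
    ∃ C : ℝ, ∀ᶠ S : ℝ in atTop, ∀ x ∈ K,
      |(hypInf m a x S).toReal - (hypInf m a x ⊤).toReal| ≤ C / √S := by
  obtain ⟨M, hM⟩ := exists_forall_hypInf_top_le hd hm ha hK hKcol
  obtain ⟨b, hb, hKb⟩ := hK.isBounded.subset_closedBall_lt 0 a
  replace hKb : ∀ x ∈ K, ‖x - a‖ ≤ b := fun x hx => mem_closedBall_iff_norm.1 (hKb hx)
  obtain ⟨D, hD, hup⟩ := exists_hypInf_le_hypInf_top_add hm ha.2 hb.le M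
  obtain ⟨D', hD', hlow⟩ := exists_hypInf_top_le_hypInf_add hm ha.2 hb.le (M + D)
  refine ⟨D + D', ?_⟩
  filter_upwards [hlow, eventually_ge_atTop 1] with S hlowS hS x hx
  have hupS := hup x (hKb x hx) (hM x hx) S hS
  have hMS : hypInf m a x S ≤ ((M + D : ℝ) : EReal) := hupS.trans <|
    add_le_add (hM x hx) (EReal.coe_le_coe_iff.2 (div_le_self hD (Real.one_le_sqrt.2 hS)))
  refine abs_toReal_sub_toReal_le ((hM x hx).trans_lt (EReal.coe_lt_top M)).ne
    (hypInf_ne_bot hm ha.2 x ⊤) (hupS.trans ?_) ((hlowS x (hKb x hx) hMS).trans ?_)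
  · gcongr
    exact le_add_of_nonneg_right hD'
  · gcongr
    exact le_add_of_nonneg_left hD

end Comparison

/-- **Finite-horizon approximation** : with `w(T,x) = inf_{φ ∈ D₀^{1,2}(1,T)} A_{x,[1,T]}(φ)`
and `w_∞(x) = inf_{φ ∈ D₀^{1,2}(1,+∞)} A_x(φ)`, for every sequence `T_n → +∞` in `(1,∞)`,
`w(T_n, ·) → w_∞` uniformly on every compact subset of `Ω`. -/
theorem finite_horizon_approximation {d N : ℕ} (hd : 2 ≤ d) (hN : 2 ≤ N)
    (m : Fin N → ℝ) (hm : ∀ i, 0 < m i)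
    (a : Conf d N) (ha : inOmega m a)
    (T : ℕ → ℝ) (hT1 : ∀ n, 1 < T n) (hTtop : Filter.Tendsto T Filter.atTop Filter.atTop)
    (K : Set (Conf d N)) (hKcpt : IsCompact K) (hKΩ : ∀ x ∈ K, inOmega m x) :
    TendstoUniformlyOn
      (fun n (x : Conf d N) => (hypInf m a x ((T n : ℝ) : EReal)).toReal)
      (fun x : Conf d N => (hypInf m a x ⊤).toReal)
      Filter.atTop K := by
  obtain ⟨C, hC⟩ :=
    exists_abs_toReal_hypInf_sub_le hd hm ha hKcpt fun x hx => (hKΩ x hx).2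
  have hsmall : Tendsto (fun n => C / √(T n)) atTop (𝓝 0) :=
    (Real.tendsto_sqrt_atTop.comp hTtop).const_div_atTop C
  rw [Metric.tendstoUniformlyOn_iff]
  intro ε hε
  filter_upwards [hTtop.eventually hC, hsmall.eventually_lt_const hε] with n hn hnε x hx
  rw [dist_comm, Real.dist_eq]
  exact (hn x hx).trans_lt hnε

end NBodyHJ
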